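/- arXiv:1303.1757 — 2 statements merged into one kernel-verified Lean document; each statement's English description precedes it below -/
import Mathlib

section
/- Andrews's balanced 5F4 evaluation: for every nonnegative integer m and all complex x, z avoiding the poles of the denominators, the terminating sum Σ_{k=0}^{2m+1} (-2m-1)_k (x+2m+2)_k (x-z+1/2)_k (x+m+1)_k (z+m+1)_k / (k! (x/2+1/2)_k (x/2+1)_k (2z+2m+2)_k (2x-2z+1)_k) equals 0. -/
/-- The rising factorial (Pochhammer symbol) `(a)_k`. -/
noncomputable def rf (a : ℂ) (k : ℕ) : ℂ := (ascPochhammer ℂ k).eval a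

/-!
For `p + q = 2 * c + 1` there is a quadratic transformation of formal power series

`₃F₂(p/2, q/2, c; p, q; -4X/(1-X)²) = (1-X)^c ₃F₂(c, p-c, 1-p+c; (p+1)/2, (q+1)/2; -X²/(4(1-X)))`,

because both sides have constant coefficient `1` and are killed by the same third order
differential operator. After multiplication by `(1-X)^(m-c)`, the terms of degree at most `2m+1` on
the right are multiples of the polynomials `X^(2j) (1-X)^(m-j)` with `j ≤ m`, which have degree at
most `2m`. So the coefficient of `X^(2m+1)` vanishes, and on the left, with `p = 2x-2z+1`,
`q = 2z+2m+2` and `c = x+m+1`, it is a nonzero multiple of the `₅F₄` sum.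
-/

open PowerSeries

local notation "⦅" a "⦆_" k:max => Polynomial.eval a (ascPochhammer _ k)

section Pochhammer

variable {K : Type*} [Field K]

lemma ascPochhammer_eval_add {R : Type*} [CommSemiring R] (a : R) (i j : ℕ) :
    ⦅a⦆_(i + j) = ⦅a⦆_i * ⦅a + i⦆_j := by
  simp [← ascPochhammer_mul]

lemma ascPochhammer_eval_two_mul [NeZero (2 : K)] (a : K) (k : ℕ) :
    ⦅a⦆_(2 * k) = 4 ^ k * ⦅a / 2⦆_k * ⦅(a + 1) / 2⦆_k := by
  induction k with
  | zero => simp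
  | succ k ih =>
    simp only [show 2 * (k + 1) = 2 * k + 1 + 1 by ring, ascPochhammer_succ_eval, ih]
    push_cast
    field_simp
    ring

lemma ascPochhammer_eval_neg_natCast_mul_factorial {R : Type*} [CommRing R] {n k : ℕ}
    (hk : k ≤ n) : ⦅-(n : R)⦆_k * (n - k).factorial = (-1) ^ k * n.factorial := by
  rw [ascPochhammer_eval_neg_eq_descPochhammer, descPochhammer_eval_eq_descFactorial, mul_assoc,
    ← Nat.cast_mul, mul_comm (n.descFactorial k), Nat.factorial_mul_descFactorial hk]

lemma add_natCast_ne_zero_of_ascPochhammer_eval_ne_zero {R : Type*} [CommRing R] [IsDomain R]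
    {a : R} {n i : ℕ} (ha : ⦅a⦆_n ≠ 0) (hi : i < n) : a + i ≠ 0 := fun h ↦
  ha ((ascPochhammer_eval_eq_zero_iff n a).2 ⟨i, hi, eq_neg_of_add_eq_zero_right h⟩)

lemma ascPochhammer_eval_ne_zero_of_le {R : Type*} [CommRing R] [IsDomain R] {a : R} {k n : ℕ}
    (hkn : k ≤ n) (ha : ⦅a⦆_n ≠ 0) : ⦅a⦆_k ≠ 0 := by
  rw [← Nat.add_sub_cancel' hkn, ascPochhammer_eval_add] at ha
  exact left_ne_zero_of_mul ha

lemma ascPochhammer_eval_add_two_mul_div_factorial [CharZero K] {a : K} {n k : ℕ} (hk : k ≤ n)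
    (ha : ⦅a / 2⦆_k ≠ 0) (ha' : ⦅(a + 1) / 2⦆_k ≠ 0) :
    (-4) ^ k * (⦅a + 2 * k⦆_(n - k) / (n - k).factorial) =
      ⦅a⦆_n / n.factorial *
        (⦅-(n : K)⦆_k * ⦅a + n⦆_k / (⦅a / 2⦆_k * ⦅(a + 1) / 2⦆_k)) := by
  have regroup : ⦅a⦆_n * ⦅a + n⦆_k =
      4 ^ k * ⦅a / 2⦆_k * ⦅(a + 1) / 2⦆_k * ⦅a + 2 * k⦆_(n - k) := by
    rw [← ascPochhammer_eval_add, ← ascPochhammer_eval_two_mul,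
      show n + k = 2 * k + (n - k) by omega, ascPochhammer_eval_add]
    push_cast
    rfl
  have factorial_ratio := ascPochhammer_eval_neg_natCast_mul_factorial (R := K) hk
  have hn : (n.factorial : K) ≠ 0 := mod_cast n.factorial_ne_zero
  have hnk : ((n - k).factorial : K) ≠ 0 := mod_cast (n - k).factorial_ne_zero
  have four_pow : (-4 : K) ^ k = (-1) ^ k * 4 ^ k := by rw [← mul_pow]; norm_num
  rw [four_pow]
  field_simp
  linear_combination -(4 ^ k * ⦅a / 2⦆_k * ⦅(a + 1) / 2⦆_k * ⦅a + 2 * k⦆_(n - k)) *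
    factorial_ratio - ⦅-(n : K)⦆_k * (n - k).factorial * regroup

/-- The coefficient `(a)_k (b)_k (c)_k / (k! (d)_k (e)_k)` of the hypergeometric series
`₃F₂(a, b, c; d, e)`. -/
noncomputable def hypergeometric₃F₂Coeff (a b c d e : K) (k : ℕ) : K :=
  ⦅a⦆_k * ⦅b⦆_k * ⦅c⦆_k / (k.factorial * ⦅d⦆_k * ⦅e⦆_k)

lemma hypergeometric₃F₂Coeff_zero (a b c d e : K) : hypergeometric₃F₂Coeff a b c d e 0 = 1 := by
  simp [hypergeometric₃F₂Coeff]

lemma hypergeometric₃F₂Coeff_succ_mul [CharZero K] (a b c : K) {d e : K} {k : ℕ}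
    (hd : d + k ≠ 0) (he : e + k ≠ 0) :
    hypergeometric₃F₂Coeff a b c d e (k + 1) * ((k + 1) * (d + k) * (e + k)) =
      hypergeometric₃F₂Coeff a b c d e k * ((a + k) * (b + k) * (c + k)) := by
  have hk : (k : K) + 1 ≠ 0 := k.cast_add_one_ne_zero
  simp only [hypergeometric₃F₂Coeff, ascPochhammer_succ_eval, Nat.factorial_succ, Nat.cast_mul,
    Nat.cast_add_one]
  calc _ = ⦅a⦆_k * ⦅b⦆_k * ⦅c⦆_k * ((a + k) * (b + k) * (c + k)) *
        ((k + 1) * (d + k) * (e + k)) /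
        (k.factorial * ⦅d⦆_k * ⦅e⦆_k * ((k + 1) * (d + k) * (e + k))) := by
          ring
    _ = _ := by
      rw [mul_div_mul_right _ _ (mul_ne_zero (mul_ne_zero hk hd) he), div_mul_eq_mul_div]

end Pochhammer

section PowerSeriesCoeff

variable {R : Type*} [CommRing R]

lemma coeff_X_mul_derivative (f : R⟦X⟧) (n : ℕ) : coeff n (X * d⁄dX R f) = n * coeff n f := by
  cases n with
  | zero => simp
  | succ n => simp [coeff_succ_X_mul, coeff_derivative, mul_comm]

lemma coeff_mul_of_X_pow_dvd {f : R⟦X⟧} {n : ℕ} (hf : X ^ n ∣ f) (g : R⟦X⟧) :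
    coeff n (g * f) = constantCoeff g * coeff n f := by
  obtain ⟨h, rfl⟩ := hf
  simp [mul_left_comm g, coeff_X_pow_mul']

end PowerSeriesCoeff

section OneSubPow

variable {R : Type*} [CommRing R] [BinomialRing R]

/-- The binomial series `(1 - X) ^ α` with arbitrary exponent `α`, obtained from Mathlib's series
for `(1 + X) ^ α`. -/
noncomputable def oneSubPow (α : R) : R⟦X⟧ := rescale (-1) (binomialSeries R α)

lemma coeff_oneSubPow (α : R) (n : ℕ) :
    coeff n (oneSubPow α) = (-1) ^ n * Ring.choose α n := by
  simp [oneSubPow, coeff_rescale]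

lemma oneSubPow_add (α β : R) : oneSubPow (α + β) = oneSubPow α * oneSubPow β := by
  simp [oneSubPow]

lemma oneSubPow_natCast (n : ℕ) : oneSubPow (n : R) = (1 - X) ^ n := by
  simp [oneSubPow, sub_eq_add_neg]

lemma constantCoeff_oneSubPow (α : R) : constantCoeff (oneSubPow α) = 1 := by
  simp [← coeff_zero_eq_constantCoeff_apply, coeff_oneSubPow]

lemma one_sub_X_mul_derivative_oneSubPow (α : R) :
    (1 - X) * d⁄dX R (oneSubPow α) = -(C α * oneSubPow α) := by
  ext n
  have choose_succ : ((n : R) + 1) * Ring.choose α (n + 1) = Ring.choose α n * (α - n) := by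
    simpa using Ring.choose_smul_choose α n.le_succ
  rw [sub_mul, one_mul, map_sub, coeff_X_mul_derivative, coeff_derivative, map_neg, coeff_C_mul,
    coeff_oneSubPow, coeff_oneSubPow, pow_succ]
  linear_combination -(-1) ^ n * choose_succ

lemma coeff_oneSubPow_neg (a : R) (n : ℕ) :
    coeff n (oneSubPow (-a)) = Ring.multichoose a n := by
  rw [coeff_oneSubPow, Ring.choose_neg', Units.smul_def, zsmul_eq_mul,
    Int.cast_negOnePow_natCast, ← mul_assoc, ← mul_pow, neg_one_mul, neg_neg, one_pow, one_mul]

lemma coeff_oneSubPow_neg_eq_div {K : Type*} [Field K] [CharZero K] (a : K) (n : ℕ) :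
    coeff n (oneSubPow (-a)) = ⦅a⦆_n / n.factorial := by
  rw [coeff_oneSubPow_neg, eq_div_iff (mod_cast n.factorial_ne_zero), mul_comm, ← nsmul_eq_mul,
    Ring.factorial_nsmul_multichoose_eq_ascPochhammer, Polynomial.ascPochhammer_smeval_eq_eval]

end OneSubPow

section Operator

variable {R : Type*} [CommRing R]

/-- The derivation `(1 - X) X d/dX`. -/
noncomputable def oneSubEuler (R : Type*) [CommRing R] : Derivation R R⟦X⟧ R⟦X⟧ :=
  ((1 - X) * X : R⟦X⟧) • d⁄dX R

lemma oneSubEuler_apply (f : R⟦X⟧) : oneSubEuler R f = (1 - X) * (X * d⁄dX R f) := by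
  simp [oneSubEuler, mul_assoc]

lemma oneSubEuler_mul (f g : R⟦X⟧) :
    oneSubEuler R (f * g) = oneSubEuler R f * g + f * oneSubEuler R g := by
  rw [Derivation.leibniz, smul_eq_mul, smul_eq_mul]
  ring

lemma oneSubEuler_C (a : R) : oneSubEuler R (C a) = 0 := by
  simp [oneSubEuler_apply]

lemma oneSubEuler_X : oneSubEuler R X = (1 - X) * X := by
  simp [oneSubEuler_apply]

lemma oneSubEuler_affine (a b : R) :
    oneSubEuler R (C a + C b * X) = C b * ((1 - X) * X) := by
  simp [oneSubEuler_C, oneSubEuler_X]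

lemma oneSubEuler_oneSubEuler_affine (a b : R) :
    oneSubEuler R (oneSubEuler R (C a + C b * X)) = C b * ((1 - 2 * X) * ((1 - X) * X)) := by
  rw [oneSubEuler_affine]
  simp only [oneSubEuler_mul, map_sub, Derivation.map_one_eq_zero, oneSubEuler_C, oneSubEuler_X]
  ring

lemma oneSubEuler_X_pow (i : ℕ) : oneSubEuler R (X ^ i) = C (i : R) * (1 - X) * X ^ i := by
  cases i with
  | zero => simp
  | succ i =>
    rw [Derivation.leibniz_pow, oneSubEuler_X, Nat.add_sub_cancel, smul_eq_mul, nsmul_eq_mul,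
      map_natCast]
    ring

lemma oneSubEuler_X_pow_mul_oneSubPow [BinomialRing R] (i : ℕ) (α : R) :
    oneSubEuler R (X ^ i * oneSubPow α) =
      (C (i : R) * (1 - X) - C α * X) * (X ^ i * oneSubPow α) := by
  rw [oneSubEuler_mul, oneSubEuler_X_pow, oneSubEuler_apply (oneSubPow α)]
  linear_combination X ^ (i + 1) * one_sub_X_mul_derivative_oneSubPow α

lemma X_pow_dvd_oneSubEuler {f : R⟦X⟧} {n : ℕ} (hf : X ^ n ∣ f) : X ^ n ∣ oneSubEuler R f := by
  obtain ⟨g, rfl⟩ := hf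
  rw [oneSubEuler_mul, oneSubEuler_X_pow]
  exact dvd_add ((dvd_mul_left _ _).mul_right g) (dvd_mul_right _ _)

lemma coeff_oneSubEuler_of_X_pow_dvd {f : R⟦X⟧} {n : ℕ} (hf : X ^ n ∣ f) :
    coeff n (oneSubEuler R f) = n * coeff n f := by
  have hf' : X ^ n ∣ X * d⁄dX R f := by
    refine X_pow_dvd_iff.2 fun i hi ↦ ?_
    rw [coeff_X_mul_derivative, X_pow_dvd_iff.1 hf i hi, mul_zero]
  rw [oneSubEuler_apply, coeff_mul_of_X_pow_dvd hf', coeff_X_mul_derivative]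
  simp

/-- For `p + q = 2 * c + 1` this is the hypergeometric operator
`ϑ (ϑ + p - 1) (ϑ + q - 1) - t (ϑ + p/2) (ϑ + q/2) (ϑ + c)`, `ϑ = t d/dt`, that annihilates
`₃F₂(p/2, q/2, c; p, q; t)`, after the substitution `t = -4X/(1-X)²`, which turns `ϑ` into
`(1+X)⁻¹ (1-X) X d/dX`, and multiplication by `(1+X) (1-X)²`. -/
noncomputable def pullbackOp (p q c : R) : Module.End R R⟦X⟧ :=
  let Θ : Module.End R R⟦X⟧ := oneSubEuler R
  Θ ^ 3 + LinearMap.mulLeft R ((2 * C c - 1) * (1 + X) + 3 * X) * Θ ^ 2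
    + LinearMap.mulLeft R ((C p - 1) * (C q - 1) * (1 - X) ^ 2
        + X * (C p * C q + 2 * C c * (2 * C c + 1)) - 2 * C c * X * (1 - X)) * Θ
    + LinearMap.mulLeft R ((1 + X) * X * C p * C q * C c)

lemma pullbackOp_apply (p q c : R) (f : R⟦X⟧) :
    pullbackOp p q c f =
      oneSubEuler R (oneSubEuler R (oneSubEuler R f))
        + ((2 * C c - 1) * (1 + X) + 3 * X) * oneSubEuler R (oneSubEuler R f)
        + ((C p - 1) * (C q - 1) * (1 - X) ^ 2 + X * (C p * C q + 2 * C c * (2 * C c + 1))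
            - 2 * C c * X * (1 - X)) * oneSubEuler R f
        + (1 + X) * X * C p * C q * C c * f :=
  rfl

variable {p q c : R}

/-- The indicial equation of the operator at `X = 0`. -/
lemma coeff_pullbackOp_of_X_pow_dvd (hpq : p + q = 2 * c + 1) {f : R⟦X⟧} {n : ℕ}
    (hf : X ^ n ∣ f) :
    coeff n (pullbackOp p q c f) = n * (p + n - 1) * (q + n - 1) * coeff n f := by
  have hf₁ := X_pow_dvd_oneSubEuler hf
  have hf₂ := X_pow_dvd_oneSubEuler hf₁
  simp only [pullbackOp_apply, map_add, coeff_mul_of_X_pow_dvd hf, coeff_mul_of_X_pow_dvd hf₁,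
    coeff_mul_of_X_pow_dvd hf₂, coeff_oneSubEuler_of_X_pow_dvd hf,
    coeff_oneSubEuler_of_X_pow_dvd hf₁, coeff_oneSubEuler_of_X_pow_dvd hf₂]
  simp only [map_sub, map_add, map_mul, map_pow, map_one, map_ofNat, constantCoeff_C,
    constantCoeff_X]
  linear_combination -(n : R) ^ 2 * coeff n f * hpq

lemma X_pow_dvd_of_X_pow_dvd_pullbackOp [IsDomain R] [CharZero R] (hpq : p + q = 2 * c + 1)
    {n : ℕ} (hp : ∀ i < n, p + i ≠ 0) (hq : ∀ i < n, q + i ≠ 0) {f : R⟦X⟧}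
    (hf : constantCoeff f = 0) (hPf : X ^ (n + 1) ∣ pullbackOp p q c f) : X ^ (n + 1) ∣ f := by
  suffices h : ∀ i ≤ n, X ^ (i + 1) ∣ f from h n le_rfl
  intro i hi
  induction i with
  | zero => simpa using X_dvd_iff.2 hf
  | succ i ih =>
    have hfi := ih (by omega)
    have indicial := coeff_pullbackOp_of_X_pow_dvd hpq hfi
    rw [X_pow_dvd_iff.1 hPf (i + 1) (by omega)] at indicial
    push_cast at indicial
    have hcoeff : (i + 1) * (p + i) * (q + i) * coeff (i + 1) f = 0 := by
      linear_combination -indicial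
    have hcoeff_zero : coeff (i + 1) f = 0 := (mul_eq_zero.1 hcoeff).resolve_left <|
      mul_ne_zero (mul_ne_zero i.cast_add_one_ne_zero (hp i hi)) (hq i hi)
    refine X_pow_dvd_iff.2 fun j hj ↦ ?_
    obtain hlt | rfl := Nat.lt_succ_iff_lt_or_eq.1 hj
    · exact X_pow_dvd_iff.1 hfi j hlt
    · exact hcoeff_zero

lemma pullbackOp_of_oneSubEuler_eq_mul {f g : R⟦X⟧} (hf : oneSubEuler R f = g * f) :
    pullbackOp p q c f =
      (oneSubEuler R (oneSubEuler R g) + 3 * g * oneSubEuler R g + g ^ 3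
        + ((2 * C c - 1) * (1 + X) + 3 * X) * (oneSubEuler R g + g ^ 2)
        + ((C p - 1) * (C q - 1) * (1 - X) ^ 2 + X * (C p * C q + 2 * C c * (2 * C c + 1))
            - 2 * C c * X * (1 - X)) * g
        + (1 + X) * X * C p * C q * C c) * f := by
  rw [pullbackOp_apply]
  simp only [hf, oneSubEuler_mul, map_add]
  ring

lemma pullbackOp_X_pow_mul_oneSubPow_neg_two_mul [BinomialRing R] (hpq : p + q = 2 * c + 1)
    (k : ℕ) :
    pullbackOp p q c (X ^ k * oneSubPow (-2 * k : R)) =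
      (k * (k + p - 1) * (k + q - 1) : R) •
          ((1 + X) * (X ^ k * oneSubPow (2 - 2 * k : R))) +
        ((2 * k + p) * (2 * k + q) * (k + c) : R) •
          ((1 + X) * (X ^ (k + 1) * oneSubPow (2 - 2 * (k + 1 : ℕ) : R))) := by
  have hΘ : oneSubEuler R (X ^ k * oneSubPow (-2 * k : R)) =
      (C (k : R) + C (k : R) * X) * (X ^ k * oneSubPow (-2 * k : R)) := by
    rw [oneSubEuler_X_pow_mul_oneSubPow]
    simp only [map_mul, map_neg, map_ofNat]
    ring
  have raise : oneSubPow (2 - 2 * k : R) = (1 - X) ^ 2 * oneSubPow (-2 * k : R) := by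
    rw [← oneSubPow_natCast, ← oneSubPow_add]
    congr 1
    push_cast
    ring
  obtain rfl := eq_sub_of_add_eq' hpq
  rw [pullbackOp_of_oneSubEuler_eq_mul hΘ, oneSubEuler_oneSubEuler_affine, oneSubEuler_affine,
    raise, show (2 - 2 * (k + 1 : ℕ) : R) = -2 * k by push_cast; ring]
  simp only [smul_eq_C_mul, map_sub, map_add, map_mul, map_ofNat, map_one]
  ring

lemma pullbackOp_X_pow_two_mul_mul_oneSubPow [BinomialRing R] (hpq : p + q = 2 * c + 1) (j : ℕ) :
    pullbackOp p q c (X ^ (2 * j) * oneSubPow (c - j)) =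
      (j * (2 * j + p - 1) * (2 * j + q - 1) : R) •
          ((2 - X) * (X ^ (2 * j) * oneSubPow (c + 1 - j))) +
        ((j + c) * (j + p - c) * (j + 1 - p + c) : R) •
          ((2 - X) * (X ^ (2 * (j + 1)) * oneSubPow (c + 1 - (j + 1 : ℕ)))) := by
  have hΘ : oneSubEuler R (X ^ (2 * j) * oneSubPow (c - j)) =
      (C (2 * j : R) + C (-(j + c)) * X) * (X ^ (2 * j) * oneSubPow (c - j)) := by
    rw [oneSubEuler_X_pow_mul_oneSubPow]
    push_cast
    simp only [map_mul, map_sub, map_add, map_neg, map_ofNat]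
    ring
  have raise : oneSubPow (c + 1 - j : R) = (1 - X) * oneSubPow (c - j) := by
    rw [← pow_one (1 - X), ← oneSubPow_natCast, ← oneSubPow_add]
    congr 1
    push_cast
    ring
  obtain rfl := eq_sub_of_add_eq' hpq
  rw [pullbackOp_of_oneSubEuler_eq_mul hΘ, oneSubEuler_oneSubEuler_affine, oneSubEuler_affine,
    raise, show (c + 1 - (j + 1 : ℕ) : R) = c - j by push_cast; ring]
  simp only [smul_eq_C_mul, map_sub, map_add, map_neg, map_mul, map_ofNat, map_one]
  ring

end Operator

lemma map_sum_eq_of_two_term {R M M' : Type*} [CommRing R] [AddCommGroup M] [Module R M]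
    [AddCommGroup M'] [Module R M'] (L : M →ₗ[R] M') {v : ℕ → M} {u : ℕ → M'} {α β r : ℕ → R}
    (hL : ∀ k, L (v k) = α k • u k + β k • u (k + 1)) (hα : α 0 = 0) (N : ℕ)
    (hr : ∀ k < N, r (k + 1) * α (k + 1) = -(r k * β k)) :
    L (∑ k ∈ Finset.range (N + 1), r k • v k) = (r N * β N) • u (N + 1) := by
  induction N with
  | zero => simp [hL, hα, mul_smul]
  | succ N ih =>
    rw [Finset.sum_range_succ, map_add, ih fun k hk ↦ hr k (by omega), map_smul, hL, smul_add,
      smul_smul, smul_smul, hr N N.lt_succ_self, neg_smul, add_neg_cancel_left]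

section QuadraticTransformation

variable {K : Type*} [Field K] [CharZero K]

/-- The part of `₃F₂(p/2, q/2, c; p, q; -4X/(1-X)²)` with summation index less than `n`. -/
noncomputable def quadraticLHS (p q c : K) (n : ℕ) : K⟦X⟧ :=
  ∑ k ∈ Finset.range n, ((-4) ^ k * hypergeometric₃F₂Coeff (p / 2) (q / 2) c p q k) •
    (X ^ k * oneSubPow (-2 * k : K))

/-- The part of `(1-X)^c ₃F₂(c, p-c, 1-p+c; (p+1)/2, (q+1)/2; -X²/(4(1-X)))` with summation index
less than `n`. -/
noncomputable def quadraticRHS (p q c : K) (n : ℕ) : K⟦X⟧ :=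
  ∑ j ∈ Finset.range n,
    ((-1 / 4) ^ j *
        hypergeometric₃F₂Coeff c (p - c) (1 - p + c) ((p + 1) / 2) ((q + 1) / 2) j) •
      (X ^ (2 * j) * oneSubPow (c - j))

lemma constantCoeff_quadraticLHS_succ (p q c : K) (n : ℕ) :
    constantCoeff (quadraticLHS p q c (n + 1)) = 1 := by
  simp [quadraticLHS, Finset.sum_range_succ', hypergeometric₃F₂Coeff_zero, smul_eq_C_mul,
    constantCoeff_oneSubPow]

lemma constantCoeff_quadraticRHS_succ (p q c : K) (n : ℕ) :
    constantCoeff (quadraticRHS p q c (n + 1)) = 1 := by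
  simp [quadraticRHS, Finset.sum_range_succ', hypergeometric₃F₂Coeff_zero, smul_eq_C_mul,
    constantCoeff_oneSubPow]

variable {p q c : K}

lemma X_pow_dvd_pullbackOp_quadraticLHS (hpq : p + q = 2 * c + 1) {n : ℕ}
    (hp : ∀ i < n, p + i ≠ 0) (hq : ∀ i < n, q + i ≠ 0) :
    X ^ (n + 1) ∣ pullbackOp p q c (quadraticLHS p q c (n + 1)) := by
  rw [quadraticLHS, map_sum_eq_of_two_term (pullbackOp p q c)
    (pullbackOp_X_pow_mul_oneSubPow_neg_two_mul hpq) (by simp)]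
  · rw [smul_eq_C_mul]
    exact ((dvd_mul_right _ _).mul_left _).mul_left _
  · intro k hk
    have recurrence := hypergeometric₃F₂Coeff_succ_mul (p / 2) (q / 2) c (hp k hk) (hq k hk)
    push_cast
    linear_combination (-4) ^ (k + 1) * recurrence

lemma X_pow_dvd_pullbackOp_quadraticRHS (hpq : p + q = 2 * c + 1) {n : ℕ}
    (hp : ∀ j < n, p + (2 * j + 1 : ℕ) ≠ 0) (hq : ∀ j < n, q + (2 * j + 1 : ℕ) ≠ 0) :
    X ^ (2 * (n + 1)) ∣ pullbackOp p q c (quadraticRHS p q c (n + 1)) := by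
  rw [quadraticRHS, map_sum_eq_of_two_term (pullbackOp p q c)
    (pullbackOp_X_pow_two_mul_mul_oneSubPow hpq) (by simp)]
  · rw [smul_eq_C_mul]
    exact ((dvd_mul_right _ _).mul_left _).mul_left _
  · intro j hj
    have hp' : (p + 1) / 2 + j ≠ 0 := fun h ↦ hp j hj (by push_cast; linear_combination 2 * h)
    have hq' : (q + 1) / 2 + j ≠ 0 := fun h ↦ hq j hj (by push_cast; linear_combination 2 * h)
    have recurrence := hypergeometric₃F₂Coeff_succ_mul c (p - c) (1 - p + c) hp' hq'
    push_cast
    linear_combination 4 * (-1 / 4) ^ (j + 1) * recurrence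

theorem X_pow_dvd_quadraticLHS_sub_quadraticRHS (hpq : p + q = 2 * c + 1) {m : ℕ}
    (hp : ⦅p⦆_(2 * m + 1) ≠ 0) (hq : ⦅q⦆_(2 * m + 1) ≠ 0) :
    X ^ (2 * m + 2) ∣ quadraticLHS p q c (2 * m + 2) - quadraticRHS p q c (m + 1) := by
  have hp' i (hi : i < 2 * m + 1) := add_natCast_ne_zero_of_ascPochhammer_eval_ne_zero hp hi
  have hq' i (hi : i < 2 * m + 1) := add_natCast_ne_zero_of_ascPochhammer_eval_ne_zero hq hi
  refine X_pow_dvd_of_X_pow_dvd_pullbackOp hpq hp' hq' ?_ ?_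
  · rw [map_sub, constantCoeff_quadraticLHS_succ, constantCoeff_quadraticRHS_succ, sub_self]
  · rw [map_sub]
    exact dvd_sub (X_pow_dvd_pullbackOp_quadraticLHS hpq hp' hq')
      (X_pow_dvd_pullbackOp_quadraticRHS hpq (fun j hj ↦ hp' _ (by omega))
        fun j hj ↦ hq' _ (by omega))

lemma coeff_oneSubPow_mul_quadraticLHS (p q c a : K) (n : ℕ) :
    coeff n (oneSubPow (-a) * quadraticLHS p q c (n + 1)) =
      ∑ k ∈ Finset.range (n + 1), (-4) ^ k * hypergeometric₃F₂Coeff (p / 2) (q / 2) c p q k *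
        (⦅a + 2 * k⦆_(n - k) / (n - k).factorial) := by
  rw [quadraticLHS, Finset.mul_sum, map_sum]
  refine Finset.sum_congr rfl fun k hk ↦ ?_
  rw [mul_smul_comm, mul_left_comm, ← oneSubPow_add, coeff_smul, coeff_X_pow_mul',
    if_pos (Finset.mem_range_succ_iff.1 hk), show -a + -2 * k = -(a + 2 * k) by ring,
    coeff_oneSubPow_neg_eq_div, smul_eq_mul]

lemma coeff_oneSubPow_mul_quadraticRHS (p q c : K) (m : ℕ) :
    coeff (2 * m + 1) (oneSubPow (-(c - m)) * quadraticRHS p q c (m + 1)) = 0 := by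
  rw [quadraticRHS, Finset.mul_sum, map_sum]
  refine Finset.sum_eq_zero fun j hj ↦ ?_
  have hj : j ≤ m := Finset.mem_range_succ_iff.1 hj
  have exponent : -(c - m) + (c - j) = -(-((m - j : ℕ) : K)) := by
    rw [Nat.cast_sub hj]
    ring
  rw [mul_smul_comm, mul_left_comm, ← oneSubPow_add, coeff_smul, coeff_X_pow_mul',
    if_pos (by omega), exponent, coeff_oneSubPow_neg_eq_div,
    ascPochhammer_eval_neg_coe_nat_of_lt (by omega), zero_div, smul_zero]

theorem sum_hypergeometric₃F₂Coeff_mul_ascPochhammer_eval_eq_zero (hpq : p + q = 2 * c + 1)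
    {m : ℕ} (hp : ⦅p⦆_(2 * m + 1) ≠ 0) (hq : ⦅q⦆_(2 * m + 1) ≠ 0) :
    ∑ k ∈ Finset.range (2 * m + 2),
      (-4) ^ k * hypergeometric₃F₂Coeff (p / 2) (q / 2) c p q k *
        (⦅c - m + 2 * k⦆_(2 * m + 1 - k) / (2 * m + 1 - k).factorial) = 0 := by
  have hdvd := (X_pow_dvd_quadraticLHS_sub_quadraticRHS hpq hp hq).mul_left (oneSubPow (-(c - m)))
  have hcoeff := X_pow_dvd_iff.1 hdvd (2 * m + 1) (by omega)
  rwa [mul_sub, map_sub, coeff_oneSubPow_mul_quadraticRHS, sub_zero,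
    coeff_oneSubPow_mul_quadraticLHS] at hcoeff

end QuadraticTransformation

theorem andrews_5F4_general {K : Type*} [Field K] [CharZero K] (m : ℕ) (x z : K)
    (h1 : ⦅x / 2 + 1 / 2⦆_(2 * m + 1) ≠ 0) (h2 : ⦅x / 2 + 1⦆_(2 * m + 1) ≠ 0)
    (h3 : ⦅2 * z + 2 * m + 2⦆_(2 * m + 1) ≠ 0) (h4 : ⦅2 * x - 2 * z + 1⦆_(2 * m + 1) ≠ 0) :
    ∑ k ∈ Finset.range (2 * m + 2),
        ⦅(-2 * m - 1 : K)⦆_k * ⦅x + 2 * m + 2⦆_k * ⦅x - z + 1 / 2⦆_k *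
            ⦅x + m + 1⦆_k * ⦅z + m + 1⦆_k /
          ((k.factorial : K) * ⦅x / 2 + 1 / 2⦆_k * ⦅x / 2 + 1⦆_k *
            ⦅2 * z + 2 * m + 2⦆_k * ⦅2 * x - 2 * z + 1⦆_k) = 0 := by
  have half_one : (x + 1) / 2 = x / 2 + 1 / 2 := by ring
  have half_two : (x + 1 + 1) / 2 = x / 2 + 1 := by ring
  have hx : ⦅x + 1⦆_(2 * m + 1) ≠ 0 := by
    refine ascPochhammer_eval_ne_zero_of_le (n := 2 * (2 * m + 1)) (by omega) ?_
    rw [ascPochhammer_eval_two_mul, half_one, half_two]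
    exact mul_ne_zero (mul_ne_zero (by simp) h1) h2
  have hsum := sum_hypergeometric₃F₂Coeff_mul_ascPochhammer_eval_eq_zero
    (c := x + m + 1) (by ring) h4 h3
  have hfactorial : ((2 * m + 1).factorial : K) ≠ 0 := mod_cast (2 * m + 1).factorial_ne_zero
  refine (mul_eq_zero.1 ?_).resolve_left (div_ne_zero hx hfactorial)
  rw [Finset.mul_sum, ← hsum]
  refine Finset.sum_congr rfl fun k hk ↦ ?_
  have hk : k ≤ 2 * m + 1 := Finset.mem_range_succ_iff.1 hk
  have hterm := ascPochhammer_eval_add_two_mul_div_factorial (a := x + 1) hk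
    (half_one ▸ ascPochhammer_eval_ne_zero_of_le hk h1)
    (half_two ▸ ascPochhammer_eval_ne_zero_of_le hk h2)
  rw [half_one, half_two, show -((2 * m + 1 : ℕ) : K) = -2 * m - 1 by push_cast; ring,
    show x + 1 + ((2 * m + 1 : ℕ) : K) = x + 2 * m + 2 by push_cast; ring] at hterm
  rw [hypergeometric₃F₂Coeff, show (2 * x - 2 * z + 1) / 2 = x - z + 1 / 2 by ring,
    show (2 * z + 2 * m + 2) / 2 = z + m + 1 by ring, show x + m + 1 - m = x + 1 by ring,
    mul_right_comm ((-4) ^ k), hterm]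
  ring

theorem andrews_5F4 (m : ℕ) (x z : ℂ)
    (h1 : ∀ k ≤ 2 * m + 1, rf (x / 2 + 1 / 2) k ≠ 0)
    (h2 : ∀ k ≤ 2 * m + 1, rf (x / 2 + 1) k ≠ 0)
    (h3 : ∀ k ≤ 2 * m + 1, rf (2 * z + 2 * m + 2) k ≠ 0)
    (h4 : ∀ k ≤ 2 * m + 1, rf (2 * x - 2 * z + 1) k ≠ 0) :
    ∑ k ∈ Finset.range (2 * m + 2),
        rf (-2 * m - 1) k * rf (x + 2 * m + 2) k * rf (x - z + 1 / 2) k *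
            rf (x + m + 1) k * rf (z + m + 1) k /
          ((k.factorial : ℂ) * rf (x / 2 + 1 / 2) k * rf (x / 2 + 1) k *
            rf (2 * z + 2 * m + 2) k * rf (2 * x - 2 * z + 1) k) = 0 :=
  andrews_5F4_general m x z (h1 _ le_rfl) (h2 _ le_rfl) (h3 _ le_rfl) (h4 _ le_rfl)
end

section
/- If a polynomial P of degree at most 2m (in one complex variable) vanishes at the 2m+2 points y = 0, 1, …, 2m+1, then P is identically zero; combined with the vanishing of Andrews's sum at these integer points and its polynomiality of degree ≤ 2m in y, this yields that Σ_{k=0}^{2m+1} (-2m-1)_k (y+2z+2m+2)_k (y+z+1/2)_k (y+2z+m+1)_k (z+m+1)_k / (k! (y/2+z+1/2)_k (y/2+z+1)_k (2z+2m+2)_k (2y+2z+1)_k) = 0 for all complex y avoiding poles. -/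
/-!
Multiplied by `(y+z+1)_m (y+2z+1)_m (2z+2m+2)_{2m+1}`, each term of Andrews's sum becomes a
polynomial in `y` and `z`, of degree at most `2m` in `y`. When `y = j` is an integer with
`0 ≤ j ≤ 2m+1`, four of the upper parameters exceed the four lower ones, suitably paired, by natural
numbers adding up to `2m`. The `k`-th term is then `(-2m-1)_k / k!` times a polynomial in `k` of
degree at most `2m`, so the sum is up to sign a `(2m+1)`-st finite difference of that polynomial and
vanishes. For natural `z` no denominator vanishes at these integers, so the cleared sum vanishes for
every `y` and every natural `z`, and therefore identically.
-/

open Polynomial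

section Polynomial

variable {R : Type*} [CommRing R] [IsDomain R] [CharZero R]

theorem eq_zero_of_forall_natCast_eval_eq_zero {P : R[X]} {n : ℕ} (hP : P.natDegree ≤ n)
    (h : ∀ j ≤ n, P.eval (j : R) = 0) : P = 0 := by
  refine eq_zero_of_natDegree_lt_card_of_eval_eq_zero P
    (f := fun i : Fin (n + 1) => ((i : ℕ) : R)) ?_ (fun i => h i (by omega)) ?_
  · exact Nat.cast_injective.comp Fin.val_injective
  · simpa using Nat.lt_succ_of_le hP

theorem eq_zero_of_forall_natCast_of_polynomial {F : R → R → R} {d : ℕ}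
    (hfst : ∀ z, ∃ P : R[X], P.natDegree ≤ d ∧ ∀ y, P.eval y = F y z)
    (hsnd : ∀ y, ∃ P : R[X], ∀ z, P.eval z = F y z)
    (h : ∀ j N : ℕ, j ≤ d → F j N = 0) (y z : R) : F y z = 0 := by
  have natCast_right (N : ℕ) (y : R) : F y N = 0 := by
    obtain ⟨P, hdeg, hP⟩ := hfst N
    have hP0 : P = 0 :=
      eq_zero_of_forall_natCast_eval_eq_zero hdeg fun j hj => (hP j).trans (h j N hj)
    rw [← hP, hP0, eval_zero]
  obtain ⟨P, hP⟩ := hsnd y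
  have hP0 : P = 0 :=
    eq_zero_of_forall_natCast_eval_eq_zero le_rfl fun N _ => (hP N).trans (natCast_right N y)
  rw [← hP, hP0, eval_zero]

theorem sum_eval_mul_eval_mul_eval_eq_zero {ι : Type*} {s : Finset ι} {A B D : ι → R[X]}
    {d e : ℕ} {a b : R} (hA : ∀ k ∈ s, (A k).natDegree ≤ d) (hB : ∀ k ∈ s, (B k).natDegree ≤ e)
    (h : ∀ j N : ℕ, j ≤ d + e →
      ∑ k ∈ s, (A k).eval (j + a * N : R) * (B k).eval (j + b * N : R) * (D k).eval (N : R) = 0)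
    (y z : R) :
    ∑ k ∈ s, (A k).eval (y + a * z) * (B k).eval (y + b * z) * (D k).eval z = 0 := by
  refine eq_zero_of_forall_natCast_of_polynomial
    (F := fun y z => ∑ k ∈ s, (A k).eval (y + a * z) * (B k).eval (y + b * z) * (D k).eval z)
    (fun z => ?_) (fun y => ?_) h y z
  · refine ⟨∑ k ∈ s, taylor (a * z) (A k) * taylor (b * z) (B k) * C ((D k).eval z), ?_,
      fun y => by simp [eval_finsetSum, taylor_eval]⟩
    refine natDegree_sum_le_of_forall_le _ _ fun k hk => ?_
    refine (natDegree_mul_C_le _ _).trans (natDegree_mul_le.trans ?_)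
    rw [natDegree_taylor, natDegree_taylor]
    exact Nat.add_le_add (hA k hk) (hB k hk)
  · exact ⟨∑ k ∈ s, (A k).comp (C y + C a * X) * (B k).comp (C y + C b * X) * D k,
      fun z => by simp [eval_finsetSum]⟩

end Polynomial

section RisingFactorial

theorem rf_zero (a : ℂ) : rf a 0 = 1 := by simp [rf]

theorem rf_succ (a : ℂ) (k : ℕ) : rf a (k + 1) = rf a k * (a + k) :=
  ascPochhammer_succ_eval k a

theorem rf_add (a : ℂ) (i j : ℕ) : rf a (i + j) = rf a i * rf (a + i) j := by
  simp [rf, ← ascPochhammer_mul]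

theorem rf_eq_rf_mul_rf_sub {i k : ℕ} (h : i ≤ k) (a : ℂ) :
    rf a k = rf a i * rf (a + i) (k - i) := by
  rw [← rf_add, Nat.add_sub_cancel' h]

theorem rf_ne_zero_of_le {a : ℂ} {i k : ℕ} (h : i ≤ k) (hk : rf a k ≠ 0) : rf a i ≠ 0 := by
  rw [rf_eq_rf_mul_rf_sub h] at hk
  exact left_ne_zero_of_mul hk

theorem rf_ne_zero_of_re_pos {a : ℂ} (ha : 0 < a.re) (k : ℕ) : rf a k ≠ 0 := by
  intro hzero
  obtain ⟨n, -, hn⟩ := (ascPochhammer_eval_eq_zero_iff k a).mp hzero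
  have hre : (n : ℝ) = -a.re := by simpa using congrArg Complex.re hn
  linarith [n.cast_nonneg (α := ℝ)]

theorem rf_neg_natCast_div_factorial (n k : ℕ) :
    rf (-n) k / k.factorial = (-1) ^ k * n.choose k := by
  have hk : (k.factorial : ℂ) ≠ 0 := mod_cast k.factorial_ne_zero
  rw [rf, ascPochhammer_eval_neg_eq_descPochhammer, descPochhammer_eval_eq_descFactorial,
    Nat.descFactorial_eq_factorial_mul_choose, div_eq_iff hk]
  push_cast
  ring

theorem rf_two_mul_add_one_even (x : ℂ) (k : ℕ) :
    rf (2 * x + 1) (2 * k) = 4 ^ k * (rf (x + 1 / 2) k * rf (x + 1) k) := by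
  induction k with
  | zero => simp [rf_zero]
  | succ k ih =>
    rw [show 2 * (k + 1) = 2 * k + 1 + 1 by ring]
    simp only [rf_succ, ih]
    push_cast
    ring

theorem rf_two_mul_add_one (x : ℂ) (k : ℕ) :
    rf (2 * x + 1) k = 2 ^ k * (rf (x + 1 / 2) ((k + 1) / 2) * rf (x + 1) (k / 2)) := by
  have four_pow (i : ℕ) : (4 : ℂ) ^ i = 2 ^ (2 * i) := by rw [pow_mul]; norm_num
  obtain ⟨i, rfl | rfl⟩ := Nat.even_or_odd' k
  · rw [rf_two_mul_add_one_even, four_pow, show (2 * i + 1) / 2 = i by omega,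
      show 2 * i / 2 = i by omega]
  · rw [rf_succ, rf_two_mul_add_one_even, four_pow, show (2 * i + 1 + 1) / 2 = i + 1 by omega,
      show (2 * i + 1) / 2 = i by omega, rf_succ]
    push_cast
    ring

theorem eval_taylor_ascPochhammer (a x : ℂ) (n : ℕ) :
    (taylor a (ascPochhammer ℂ n)).eval x = rf (x + a) n :=
  taylor_eval a _ x

theorem natDegree_taylor_ascPochhammer (a : ℂ) (n : ℕ) :
    (taylor a (ascPochhammer ℂ n)).natDegree = n := by
  rw [natDegree_taylor, ascPochhammer_natDegree]

end RisingFactorial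

section Divisibility

theorem exists_polynomial_mul_rf_two_mul_add_one {m k : ℕ} (hk : k / 2 ≤ m) :
    ∃ A : ℂ[X], A.natDegree ≤ m ∧
      ∀ x, A.eval x * rf (2 * x + 1) k = rf (x + 1 / 2) k * rf (x + 1) m := by
  refine ⟨C (2 ^ k)⁻¹ *
    (taylor (1 / 2 + ((k + 1) / 2 : ℕ) : ℂ) (ascPochhammer ℂ (k - (k + 1) / 2)) *
      taylor (1 + (k / 2 : ℕ) : ℂ) (ascPochhammer ℂ (m - k / 2))), ?_, fun x => ?_⟩
  · refine (natDegree_C_mul_le _ _).trans (natDegree_mul_le.trans ?_)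
    simp only [natDegree_taylor_ascPochhammer]
    omega
  · rw [rf_two_mul_add_one, rf_eq_rf_mul_rf_sub (show (k + 1) / 2 ≤ k by omega) (x + 1 / 2),
      rf_eq_rf_mul_rf_sub hk (x + 1)]
    simp only [eval_mul, eval_C, eval_taylor_ascPochhammer, ← add_assoc]
    field_simp

theorem exists_polynomial_mul_rf_add_one_two_mul {m k : ℕ} (hk : k ≤ 2 * m + 1) :
    ∃ B : ℂ[X], B.natDegree ≤ m ∧
      ∀ w, B.eval w * rf (w + 1) (2 * k) = rf (w + 1) (m + k) * rf (w + 2 * m + 2) k := by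
  rcases le_or_gt k m with hkm | hmk
  · refine ⟨taylor (1 + (2 * k : ℕ) : ℂ) (ascPochhammer ℂ (m + k - 2 * k)) *
      taylor (2 * m + 2 : ℂ) (ascPochhammer ℂ k), ?_, fun w => ?_⟩
    · refine natDegree_mul_le.trans ?_
      simp only [natDegree_taylor_ascPochhammer]
      omega
    · rw [rf_eq_rf_mul_rf_sub (show 2 * k ≤ m + k by omega) (w + 1)]
      simp only [eval_mul, eval_taylor_ascPochhammer, ← add_assoc]
      ring
  · refine ⟨taylor (1 + (2 * k : ℕ) : ℂ) (ascPochhammer ℂ (2 * m + 1 + k - 2 * k)) *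
      taylor (2 * m + 2 : ℂ) (ascPochhammer ℂ (m + k - (2 * m + 1))), ?_, fun w => ?_⟩
    · refine natDegree_mul_le.trans ?_
      simp only [natDegree_taylor_ascPochhammer]
      omega
    · have hshift : w + 1 + (2 * m + 1 : ℕ) = w + 2 * m + 2 := by push_cast; ring
      have hlong : rf (w + 1) (2 * m + 1) * rf (w + 2 * m + 2) k =
          rf (w + 1) (2 * k) * rf (w + 1 + (2 * k : ℕ)) (2 * m + 1 + k - 2 * k) := by
        rw [← rf_eq_rf_mul_rf_sub (by omega), rf_add (w + 1) (2 * m + 1) k, hshift]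
      rw [rf_eq_rf_mul_rf_sub (show 2 * m + 1 ≤ m + k by omega) (w + 1), hshift]
      simp only [eval_mul, eval_taylor_ascPochhammer, ← add_assoc]
      linear_combination -rf (w + 2 * m + 2) (m + k - (2 * m + 1)) * hlong

theorem exists_polynomial_mul_rf_half_mul_rf_half {m k : ℕ} (hk : k ≤ 2 * m + 1) :
    ∃ B : ℂ[X], B.natDegree ≤ m ∧ ∀ w,
      B.eval w * (rf (w / 2 + 1 / 2) k * rf (w / 2 + 1) k) =
        rf (w + 1) m * rf (w + m + 1) k * rf (w + 2 * m + 2) k := by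
  obtain ⟨B, hdeg, hB⟩ := exists_polynomial_mul_rf_add_one_two_mul hk
  refine ⟨C (4 ^ k) * B, (natDegree_C_mul_le _ _).trans hdeg, fun w => ?_⟩
  have hdup := rf_two_mul_add_one_even (w / 2) k
  have hadd := rf_add (w + 1) m k
  rw [mul_div_cancel₀ w two_ne_zero] at hdup
  rw [add_right_comm] at hadd
  rw [← hadd, ← hB, hdup, eval_mul, eval_C]
  ring

theorem exists_polynomial_mul_rf_affine {k n : ℕ} (hk : k ≤ n) (a b : ℂ) :
    ∃ D : ℂ[X], ∀ z, D.eval z * rf (a * z + b) k = rf (a * z + b) n := by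
  refine ⟨(taylor (b + k) (ascPochhammer ℂ (n - k))).comp (C a * X), fun z => ?_⟩
  rw [rf_eq_rf_mul_rf_sub hk, eval_comp, eval_taylor_ascPochhammer, eval_mul, eval_C, eval_X,
    add_assoc, mul_comm]

end Divisibility

section FiniteDifference

theorem sum_rf_neg_div_factorial_mul_eval_eq_zero {p : ℂ[X]} {n : ℕ} (hp : p.natDegree < n) :
    ∑ k ∈ Finset.range (n + 1), rf (-n) k / k.factorial * p.eval (k : ℂ) = 0 := by
  have hdiff := congrFun (fwdDiff_iter_eq_zero_of_degree_lt hp) 0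
  rw [fwdDiff_iter_eq_sum_shift, Pi.zero_apply] at hdiff
  rw [← mul_zero ((-1 : ℂ) ^ n), ← hdiff, Finset.mul_sum]
  refine Finset.sum_congr rfl fun k hk => ?_
  have hkn : k ≤ n := Finset.mem_range_succ_iff.mp hk
  have hsign : (-1 : ℂ) ^ n * (-1) ^ (n - k) = (-1) ^ k := by
    rw [← pow_add, show n + (n - k) = k + 2 * (n - k) by omega, pow_add, pow_mul]
    simp
  rw [rf_neg_natCast_div_factorial, ← hsign]
  simp [mul_assoc]

theorem exists_polynomial_eval_mul_rf {a : ℂ} {n : ℕ} (ha : rf a n ≠ 0) :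
    ∃ p : ℂ[X], p.natDegree ≤ n ∧ ∀ k : ℕ, p.eval (k : ℂ) * rf a k = rf (a + n) k := by
  refine ⟨C (rf a n)⁻¹ * taylor a (ascPochhammer ℂ n), ?_, fun k => ?_⟩
  · exact (natDegree_C_mul_le _ _).trans (natDegree_taylor_ascPochhammer a n).le
  · have hswap : rf a k * rf (a + k) n = rf a n * rf (a + n) k := by
      rw [← rf_add, ← rf_add, add_comm]
    rw [eval_mul, eval_C, eval_taylor_ascPochhammer, add_comm (k : ℂ), mul_assoc,
      mul_comm (rf _ n), hswap, inv_mul_cancel_left₀ ha]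

theorem exists_polynomial_eval_mul_rf_mul_rf {a b c d : ℂ} {i l n : ℕ} (hn : i + l = n)
    (ha : rf a i ≠ 0) (hb : rf b l ≠ 0) (hc : c = a + i) (hd : d = b + l) :
    ∃ p : ℂ[X], p.natDegree ≤ n ∧
      ∀ k : ℕ, p.eval (k : ℂ) * (rf a k * rf b k) = rf c k * rf d k := by
  obtain ⟨p, hpdeg, hp⟩ := exists_polynomial_eval_mul_rf ha
  obtain ⟨q, hqdeg, hq⟩ := exists_polynomial_eval_mul_rf hb
  refine ⟨p * q, natDegree_mul_le.trans (by omega), fun k => ?_⟩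
  rw [hc, hd, ← hp, ← hq, eval_mul]
  ring

end FiniteDifference

section Andrews

/-- The `k`-th term of Andrews's terminating series. -/
noncomputable def andrewsTerm (m : ℕ) (y z : ℂ) (k : ℕ) : ℂ :=
  rf (-2 * m - 1) k * rf (y + 2 * z + 2 * m + 2) k * rf (y + z + 1 / 2) k *
      rf (y + 2 * z + m + 1) k * rf (z + m + 1) k /
    ((k.factorial : ℂ) * rf (y / 2 + z + 1 / 2) k * rf (y / 2 + z + 1) k *
      rf (2 * z + 2 * m + 2) k * rf (2 * y + 2 * z + 1) k)

/-- The point `(y, z)` is not a pole of any term of Andrews's series. -/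
def AndrewsRegular (m : ℕ) (y z : ℂ) : Prop :=
  ∀ k ≤ 2 * m + 1,
    rf (y / 2 + z + 1 / 2) k ≠ 0 ∧ rf (y / 2 + z + 1) k ≠ 0 ∧
      rf (2 * z + 2 * m + 2) k ≠ 0 ∧ rf (2 * y + 2 * z + 1) k ≠ 0

/-- A factor that turns every term of Andrews's series into a polynomial in `y` and `z`. Since the
upper parameters cancel most of the lower ones, its degree in `y` is only `2 * m`. -/
noncomputable def andrewsDenom (m : ℕ) (y z : ℂ) : ℂ :=
  rf (y + z + 1) m * rf (y + 2 * z + 1) m * rf (2 * z + 2 * m + 2) (2 * m + 1)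

theorem andrewsRegular_natCast (m j N : ℕ) : AndrewsRegular m j N := by
  refine fun k _ => ⟨?_, ?_, ?_, ?_⟩ <;> refine rf_ne_zero_of_re_pos ?_ k <;>
    simp only [Complex.add_re, Complex.mul_re, Complex.div_ofNat_re, Complex.natCast_re,
      Complex.natCast_im, Complex.re_ofNat, Complex.im_ofNat, Complex.one_re, mul_zero,
      sub_zero] <;>
    positivity

variable {m : ℕ}

theorem AndrewsRegular.andrewsDenom_ne_zero {y z : ℂ} (h : AndrewsRegular m y z) :
    andrewsDenom m y z ≠ 0 := by
  obtain ⟨hhalf, hone, hz, hyz⟩ := h (2 * m + 1) le_rfl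
  refine mul_ne_zero (mul_ne_zero ?_ ?_) hz
  · rw [← mul_add, rf_two_mul_add_one, show (2 * m + 1) / 2 = m by omega] at hyz
    exact right_ne_zero_of_mul (right_ne_zero_of_mul hyz)
  · refine rf_ne_zero_of_le (show m ≤ 2 * (2 * m + 1) by omega) ?_
    rw [show y + 2 * z + 1 = 2 * (y / 2 + z) + 1 by ring, rf_two_mul_add_one_even]
    exact mul_ne_zero (pow_ne_zero _ (by norm_num)) (mul_ne_zero hhalf hone)

theorem exists_polynomial_andrewsDenom_mul_andrewsTerm {k : ℕ} (hk : k ≤ 2 * m + 1) :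
    ∃ A B D : ℂ[X], A.natDegree ≤ m ∧ B.natDegree ≤ m ∧ ∀ y z, AndrewsRegular m y z →
      andrewsDenom m y z * andrewsTerm m y z k =
        A.eval (y + z) * B.eval (y + 2 * z) * D.eval z := by
  obtain ⟨A, hAdeg, hA⟩ := exists_polynomial_mul_rf_two_mul_add_one (show k / 2 ≤ m by omega)
  obtain ⟨B, hBdeg, hB⟩ := exists_polynomial_mul_rf_half_mul_rf_half hk
  obtain ⟨D, hD⟩ := exists_polynomial_mul_rf_affine hk 2 (2 * m + 2)
  refine ⟨A, B, C (rf (-2 * m - 1) k / k.factorial) * taylor (m + 1 : ℂ) (ascPochhammer ℂ k) * D,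
    hAdeg, hBdeg, fun y z h => ?_⟩
  obtain ⟨hhalf, hone, hz, hyz⟩ := h k hk
  have hfact : (k.factorial : ℂ) ≠ 0 := mod_cast k.factorial_ne_zero
  have hden := mul_ne_zero (mul_ne_zero (mul_ne_zero (mul_ne_zero hfact hhalf) hone) hz) hyz
  have hAyz := hA (y + z)
  have hByz := hB (y + 2 * z)
  have hDz := hD z
  rw [mul_add] at hAyz
  rw [show (y + 2 * z) / 2 = y / 2 + z by ring] at hByz
  rw [← add_assoc] at hDz
  rw [andrewsTerm, mul_div_assoc', div_eq_iff hden]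
  simp only [eval_mul, eval_C, eval_taylor_ascPochhammer, ← add_assoc]
  calc
    _ = rf (-2 * m - 1) k / k.factorial * k.factorial * rf (z + m + 1) k *
        (A.eval (y + z) * rf (2 * y + 2 * z + 1) k) *
        (B.eval (y + 2 * z) * (rf (y / 2 + z + 1 / 2) k * rf (y / 2 + z + 1) k)) *
        (D.eval z * rf (2 * z + 2 * m + 2) k) := by
      rw [hAyz, hByz, hDz, div_mul_cancel₀ _ hfact, andrewsDenom]
      ring
    _ = _ := by ring

theorem exists_polynomial_eval_mul_rf_half_natCast {j : ℕ} {z : ℂ} (hj : j ≤ 2 * m + 1)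
    (h : AndrewsRegular m j z) :
    ∃ p : ℂ[X], p.natDegree ≤ m ∧ ∀ k : ℕ,
      p.eval (k : ℂ) * (rf (j / 2 + z + 1 / 2) k * rf (j / 2 + z + 1) k) =
        rf (j + z + 1 / 2) k * rf (z + m + 1) k := by
  obtain ⟨i, rfl | rfl⟩ := Nat.even_or_odd' j <;>
    obtain ⟨l, rfl⟩ := Nat.exists_eq_add_of_le (show i ≤ m by omega)
  · exact exists_polynomial_eval_mul_rf_mul_rf rfl (h i (by omega)).1 (h l (by omega)).2.1
      (by push_cast; ring) (by push_cast; ring)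
  · simp only [mul_comm (rf (_ / 2 + z + 1 / 2) _)]
    exact exists_polynomial_eval_mul_rf_mul_rf rfl (h i (by omega)).2.1 (h l (by omega)).1
      (by push_cast; ring) (by push_cast; ring)

theorem exists_polynomial_eval_mul_rf_two_mul_natCast {j : ℕ} {z : ℂ} (hj : j ≤ 2 * m + 1)
    (h : AndrewsRegular m j z) :
    ∃ p : ℂ[X], p.natDegree ≤ m ∧ ∀ k : ℕ,
      p.eval (k : ℂ) * (rf (2 * z + 2 * m + 2) k * rf (2 * j + 2 * z + 1) k) =
        rf (j + 2 * z + 2 * m + 2) k * rf (j + 2 * z + m + 1) k := by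
  rcases le_or_gt j m with hjm | hmj
  · obtain ⟨l, rfl⟩ := Nat.exists_eq_add_of_le hjm
    exact exists_polynomial_eval_mul_rf_mul_rf rfl (h j hj).2.2.1 (h l (by omega)).2.2.2
      (by ring) (by push_cast; ring)
  · obtain ⟨i, rfl⟩ := Nat.exists_eq_add_of_lt hmj
    obtain ⟨l, rfl⟩ := Nat.exists_eq_add_of_le (show i ≤ m by omega)
    simp only [mul_comm (rf (_ + 2 * z + 2 * _ + 2) _)]
    exact exists_polynomial_eval_mul_rf_mul_rf rfl (h i (by omega)).2.2.1 (h l (by omega)).2.2.2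
      (by push_cast; ring) (by push_cast; ring)

theorem sum_andrewsTerm_natCast_eq_zero {j : ℕ} {z : ℂ} (hj : j ≤ 2 * m + 1)
    (h : AndrewsRegular m j z) :
    ∑ k ∈ Finset.range (2 * m + 2), andrewsTerm m j z k = 0 := by
  obtain ⟨p, hpdeg, hp⟩ := exists_polynomial_eval_mul_rf_half_natCast hj h
  obtain ⟨q, hqdeg, hq⟩ := exists_polynomial_eval_mul_rf_two_mul_natCast hj h
  have hdeg : (p * q).natDegree < 2 * m + 1 := natDegree_mul_le.trans_lt (by omega)
  rw [← sum_rf_neg_div_factorial_mul_eval_eq_zero hdeg]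
  refine Finset.sum_congr rfl fun k hk => ?_
  obtain ⟨hhalf, hone, hz, hyz⟩ := h k (Finset.mem_range_succ_iff.mp hk)
  rw [eval_mul, eq_div_of_mul_eq (mul_ne_zero hhalf hone) (hp k),
    eq_div_of_mul_eq (mul_ne_zero hz hyz) (hq k), andrewsTerm, div_mul_div_comm, div_mul_div_comm,
    show -((2 * m + 1 : ℕ) : ℂ) = -2 * m - 1 by push_cast; ring]
  congr 1 <;> ring

theorem sum_andrewsTerm_eq_zero {y z : ℂ} (h : AndrewsRegular m y z) :
    ∑ k ∈ Finset.range (2 * m + 2), andrewsTerm m y z k = 0 := by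
  have cleared (k : ℕ) (hk : k ∈ Finset.range (2 * m + 2)) :=
    exists_polynomial_andrewsDenom_mul_andrewsTerm (Finset.mem_range_succ_iff.mp hk)
  choose! A B D hA hB hABD using cleared
  have hsum {y z : ℂ} (h : AndrewsRegular m y z) :
      andrewsDenom m y z * ∑ k ∈ Finset.range (2 * m + 2), andrewsTerm m y z k =
        ∑ k ∈ Finset.range (2 * m + 2),
          (A k).eval (y + 1 * z) * (B k).eval (y + 2 * z) * (D k).eval z := by
    rw [Finset.mul_sum, one_mul]
    exact Finset.sum_congr rfl fun k hk => hABD k hk y z h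
  have cleared_sum_eq_zero := sum_eval_mul_eval_mul_eval_eq_zero hA hB (fun j N hj => by
    have hreg := andrewsRegular_natCast m j N
    rw [← hsum hreg, sum_andrewsTerm_natCast_eq_zero (by omega) hreg, mul_zero]) y z
  exact (mul_eq_zero.mp ((hsum h).trans cleared_sum_eq_zero)).resolve_left h.andrewsDenom_ne_zero

end Andrews

theorem vanishing_poly_and_andrews (m : ℕ) :
    (∀ P : Polynomial ℂ, P.degree ≤ (2 * m : ℕ) →
        (∀ j : ℕ, j ≤ 2 * m + 1 → P.eval (j : ℂ) = 0) → P = 0) ∧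
    (∀ y z : ℂ,
      (∀ k ≤ 2 * m + 1,
        rf (y / 2 + z + 1 / 2) k ≠ 0 ∧ rf (y / 2 + z + 1) k ≠ 0 ∧
          rf (2 * z + 2 * m + 2) k ≠ 0 ∧ rf (2 * y + 2 * z + 1) k ≠ 0) →
      ∑ k ∈ Finset.range (2 * m + 2),
          rf (-2 * m - 1) k * rf (y + 2 * z + 2 * m + 2) k * rf (y + z + 1 / 2) k *
              rf (y + 2 * z + m + 1) k * rf (z + m + 1) k /
            ((k.factorial : ℂ) * rf (y / 2 + z + 1 / 2) k * rf (y / 2 + z + 1) k *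
              rf (2 * z + 2 * m + 2) k * rf (2 * y + 2 * z + 1) k) = 0) := by
  refine ⟨fun P hP h => ?_, fun y z h => sum_andrewsTerm_eq_zero h⟩
  exact eq_zero_of_forall_natCast_eval_eq_zero (natDegree_le_of_degree_le hP) fun j hj =>
    h j (by omega)
end
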